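/- Let (A, C, ψ) be a right-right entwining structure over a commutative ring k and g ∈ C a grouplike element. If (A, C, ψ, g) is cleft (i.e. there exists a convolution-invertible λ ∈ Q), then there exists q ∈ Q with q(g) = 1_A (equivalently, the Morita map τ of the associated Morita context is surjective). -/

import Mathlib

open TensorProduct CoalgebraStruct

universe u

section Entwining

variable (k A C : Type u) [CommRing k] [Ring A] [Algebra k A]
  [AddCommGroup C] [Module k C] [Coalgebra k C]

/-- The map `A ⊗ C → A ⊗ C`, `a ⊗ c ↦ Σ a · b_ψ ⊗ c^ψ` (entwine with `b` and multiply). -/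
noncomputable def entwineRight (ψ : C ⊗[k] A →ₗ[k] A ⊗[k] C) (b : A) :
    A ⊗[k] C →ₗ[k] A ⊗[k] C :=
  LinearMap.rTensor C (LinearMap.mul' k A) ∘ₗ
    (TensorProduct.assoc k A A C).symm.toLinearMap ∘ₗ
    LinearMap.lTensor A (ψ ∘ₗ (TensorProduct.mk k C A).flip b)

/-- The map `(C ⊗ C) ⊗ A → A ⊗ (C ⊗ C)`,
`c ⊗ c' ⊗ a ↦ Σ a_{ψΨ} ⊗ c^Ψ ⊗ c'^ψ`. -/
noncomputable def entwineTwice (ψ : C ⊗[k] A →ₗ[k] A ⊗[k] C) :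
    (C ⊗[k] C) ⊗[k] A →ₗ[k] A ⊗[k] (C ⊗[k] C) :=
  (TensorProduct.assoc k A C C).toLinearMap ∘ₗ
    LinearMap.rTensor C ψ ∘ₗ
    (TensorProduct.assoc k C A C).symm.toLinearMap ∘ₗ
    LinearMap.lTensor C ψ ∘ₗ
    (TensorProduct.assoc k C C A).toLinearMap

/-- `(A, C, ψ)` is a right-right entwining structure. -/
noncomputable def IsEntwining (ψ : C ⊗[k] A →ₗ[k] A ⊗[k] C) : Prop :=
  (∀ (c : C) (a b : A), ψ (c ⊗ₜ[k] (a * b)) = entwineRight k A C ψ b (ψ (c ⊗ₜ[k] a))) ∧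
  (∀ c : C, ψ (c ⊗ₜ[k] (1 : A)) = (1 : A) ⊗ₜ[k] c) ∧
  (∀ (c : C) (a : A),
      LinearMap.lTensor A (comul (R := k)) (ψ (c ⊗ₜ[k] a)) =
        entwineTwice k A C ψ ((comul c) ⊗ₜ[k] a)) ∧
  (∀ (c : C) (a : A),
      TensorProduct.rid k A (LinearMap.lTensor A (counit (R := k)) (ψ (c ⊗ₜ[k] a))) =
        (counit (R := k) c) • a)

/-- `g ∈ C` is a grouplike element. -/
def IsGrouplikeElem (g : C) : Prop := comul g = g ⊗ₜ[k] g ∧ counit (R := k) g = 1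

/-- Membership in `Q`: `ψ(c_1 ⊗ q(c_2)) = q(c) ⊗ g` for all `c`. -/
def MemQ (ψ : C ⊗[k] A →ₗ[k] A ⊗[k] C) (g : C) (q : C →ₗ[k] A) : Prop :=
  ∀ c : C, ψ (LinearMap.lTensor C q (comul c)) = q c ⊗ₜ[k] g

/-- The convolution product on `Hom_k(C, A)`. -/
noncomputable def conv (f h : C →ₗ[k] A) : C →ₗ[k] A :=
  LinearMap.mul' k A ∘ₗ TensorProduct.map f h ∘ₗ comul

/-- The unit of the convolution algebra: `c ↦ ε(c) 1`. -/
noncomputable def convUnit : C →ₗ[k] A :=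
  Algebra.linearMap k A ∘ₗ counit

end Entwining

/-- If `(A, C, ψ, g)` is cleft (there is a convolution-invertible `λ ∈ Q`), then there
exists `q ∈ Q` with `q(g) = 1`. -/
theorem exists_normalized_of_cleft
    (k A C : Type u) [CommRing k] [Ring A] [Algebra k A]
    [AddCommGroup C] [Module k C] [Coalgebra k C]
    (ψ : C ⊗[k] A →ₗ[k] A ⊗[k] C) (hψ : IsEntwining k A C ψ)
    (g : C) (hg : IsGrouplikeElem k C g)
    (hcleft : ∃ lam lamInv : C →ₗ[k] A, MemQ k A C ψ g lam ∧
      conv k A C lam lamInv = convUnit k A C ∧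
      conv k A C lamInv lam = convUnit k A C) :
    ∃ q : C →ₗ[k] A, MemQ k A C ψ g q ∧ q g = 1 := by
  obtain ⟨lam, li, hQ, h1, h2⟩ := hcleft
  obtain ⟨hmul, hone, -, -⟩ := hψ
  obtain ⟨hgc, hge⟩ := hg
  have e1 : lam g * li g = 1 := by
    have := LinearMap.congr_fun h1 g
    simpa [conv, convUnit, hgc, hge] using this
  have e2 : li g * lam g = 1 := by
    have := LinearMap.congr_fun h2 g
    simpa [conv, convUnit, hgc, hge] using this
  have hu : ψ (g ⊗ₜ[k] lam g) = lam g ⊗ₜ[k] g := by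
    have := hQ g
    simpa [hgc] using this
  -- left multiplication by `a` on `A ⊗ C`
  have hR : ∀ (a b : A) (c : C), entwineRight k A C ψ b (a ⊗ₜ[k] c) =
      LinearMap.rTensor C (LinearMap.mulLeft k a) (ψ (c ⊗ₜ[k] b)) := by
    intro a b c
    simp only [entwineRight, LinearMap.comp_apply, LinearMap.lTensor_tmul,
      LinearMap.flip_apply, TensorProduct.mk_apply]
    induction ψ (c ⊗ₜ[k] b) using TensorProduct.induction_on with
    | zero => simp
    | tmul x y => simp
    | add x y hx hy => simp only [TensorProduct.tmul_add, map_add, hx, hy]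
  -- `lam(g)⁻¹` is coinvariant
  have hb : ψ (g ⊗ₜ[k] li g) = li g ⊗ₜ[k] g := by
    have h := hmul g (lam g) (li g)
    rw [e1, hone, hu, hR] at h
    have h' := congrArg (LinearMap.rTensor C (LinearMap.mulLeft k (li g))) h
    rw [← LinearMap.comp_apply, ← LinearMap.rTensor_comp, ← LinearMap.mulLeft_mul, e2,
      LinearMap.mulLeft_one, LinearMap.rTensor_id] at h'
    simpa using h'.symm
  refine ⟨LinearMap.mulRight k (li g) ∘ₗ lam, ?_, by simpa using e1⟩
  intro c
  have key : ∀ t : C ⊗[k] C,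
      ψ (LinearMap.lTensor C (LinearMap.mulRight k (li g) ∘ₗ lam) t) =
        entwineRight k A C ψ (li g) (ψ (LinearMap.lTensor C lam t)) := by
    intro t
    induction t using TensorProduct.induction_on with
    | zero => simp
    | tmul x y => simp [hmul]
    | add x y hx hy => simp only [map_add, hx, hy]
  rw [key, hQ c, hR, hb]
  simp
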